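/- arXiv:1205.3288 — 2 statements merged into one kernel-verified Lean document; each statement's English description precedes it below -/
import Mathlib

section
/- Let (X,d) be a compact metric space and f: X → ℝ a Lipschitz function. Then for every x ∈ X and all 0 ≤ t < s one has D⁺(x,t) ≤ D⁻(x,s). Consequently, for every x ∈ X the functions t ↦ D⁺(x,t) and t ↦ D⁻(x,t) are nondecreasing on [0,∞) and they coincide for all t ∈ [0,∞) with at most countably many exceptions. -/
open Filter Topology Set MeasureTheory
open scoped ENNReal NNReal

/-- Hopf-Lax semigroup: `Q_t f (x) = inf_y ( f y + d(x,y)^2 / (2t) )`, with `Q_0 f = f`. -/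
noncomputable def HL {X : Type*} [MetricSpace X] (f : X → ℝ) (t : ℝ) (x : X) : ℝ :=
  if t = 0 then f x else ⨅ y : X, (f y + dist x y ^ 2 / (2 * t))

/-- The set of minimizers of `y ↦ f y + d(x,y)^2/(2t)`. -/
def minSet {X : Type*} [MetricSpace X] (f : X → ℝ) (t : ℝ) (x : X) : Set X :=
  {y | ∀ z : X, f y + dist x y ^ 2 / (2 * t) ≤ f z + dist x z ^ 2 / (2 * t)}

/-- `D⁺(x,t)`: the largest distance from `x` to a minimizer of `y ↦ f y + d(x,y)^2/(2t)`,
with `D⁺(x,0) = 0`. -/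
noncomputable def Dplus {X : Type*} [MetricSpace X] (f : X → ℝ) (x : X) (t : ℝ) : ℝ :=
  if t = 0 then 0 else sSup (dist x '' minSet f t x)

/-- `D⁻(x,t)`: the smallest distance from `x` to a minimizer of `y ↦ f y + d(x,y)^2/(2t)`,
with `D⁻(x,0) = 0`. -/
noncomputable def Dminus {X : Type*} [MetricSpace X] (f : X → ℝ) (x : X) (t : ℝ) : ℝ :=
  if t = 0 then 0 else sInf (dist x '' minSet f t x)

theorem minSet_nonempty {X : Type*} [MetricSpace X] [CompactSpace X] [Nonempty X] {f : X → ℝ}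
    (hf : Continuous f) (t : ℝ) (x : X) : (minSet f t x).Nonempty := by
  have hc : Continuous fun y => f y + dist x y ^ 2 / (2 * t) := by fun_prop
  obtain ⟨y, -, hy⟩ := isCompact_univ.exists_isMinOn univ_nonempty hc.continuousOn
  exact ⟨y, fun z => hy (mem_univ z)⟩

/-- Minimizers move away from `x` as the time parameter grows. -/
theorem dist_le_dist_of_mem_minSet {X : Type*} [MetricSpace X] {f : X → ℝ} {x y z : X} {t s : ℝ}
    (ht : 0 < t) (hts : t < s) (hy : y ∈ minSet f t x) (hz : z ∈ minSet f s x) :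
    dist x y ≤ dist x z := by
  have h₁ := hy z
  have h₂ := hz y
  have hinv : (2 * s)⁻¹ < (2 * t)⁻¹ := inv_strictAnti₀ (by positivity) (by linarith)
  simp only [div_eq_mul_inv] at h₁ h₂
  refine le_of_sq_le_sq ?_ dist_nonneg
  by_contra! hlt
  nlinarith [mul_pos (sub_pos.2 hlt) (sub_pos.2 hinv)]

theorem bddBelow_dist_image {X : Type*} [MetricSpace X] (x : X) (S : Set X) :
    BddBelow (dist x '' S) :=
  ⟨0, by rintro _ ⟨y, -, rfl⟩; exact dist_nonneg⟩

theorem bddAbove_dist_image {X : Type*} [MetricSpace X] [CompactSpace X] (x : X) (S : Set X) :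
    BddAbove (dist x '' S) :=
  (isCompact_univ.image (continuous_const.dist continuous_id)).bddAbove.mono
    (image_mono (subset_univ S))

theorem Dminus_le_Dplus {X : Type*} [MetricSpace X] [CompactSpace X] (f : X → ℝ) (x : X) (t : ℝ) :
    Dminus f x t ≤ Dplus f x t := by
  unfold Dminus Dplus
  split_ifs
  · exact le_rfl
  · exact Real.sInf_le_sSup _ (bddBelow_dist_image x _) (bddAbove_dist_image x _)

theorem Dplus_le_Dminus {X : Type*} [MetricSpace X] [CompactSpace X] [Nonempty X] {f : X → ℝ}
    (hf : Continuous f) (x : X) {t s : ℝ} (ht : 0 ≤ t) (hts : t < s) :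
    Dplus f x t ≤ Dminus f x s := by
  have hs : s ≠ 0 := (ht.trans_lt hts).ne'
  rw [Dminus, if_neg hs]
  refine le_csInf ((minSet_nonempty hf s x).image _) ?_
  rintro _ ⟨z, hz, rfl⟩
  unfold Dplus
  split_ifs with h
  · exact dist_nonneg
  · refine csSup_le ((minSet_nonempty hf t x).image _) ?_
    rintro _ ⟨y, hy, rfl⟩
    exact dist_le_dist_of_mem_minSet (lt_of_le_of_ne ht (Ne.symm h)) hts hy hz

/-- **Monotonicity of `D±`** (Proposition 3.1): for a Lipschitz `f` on a compact metric space,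
`D⁺(x,t) ≤ D⁻(x,s)` for `0 ≤ t < s`; hence `D⁺(x,·)`, `D⁻(x,·)` are nondecreasing on `[0,∞)` and
coincide there with at most countably many exceptions. -/
theorem stmt0 {X : Type*} [MetricSpace X] [CompactSpace X] [Nonempty X]
    (f : X → ℝ) (hf : ∃ K : ℝ≥0, LipschitzWith K f) :
    (∀ x : X, ∀ t s : ℝ, 0 ≤ t → t < s → Dplus f x t ≤ Dminus f x s) ∧
    (∀ x : X, MonotoneOn (Dplus f x) (Ici 0) ∧ MonotoneOn (Dminus f x) (Ici 0)) ∧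
    (∀ x : X, ∃ E : Set ℝ, E.Countable ∧
      ∀ t ∈ Ici (0 : ℝ), t ∉ E → Dplus f x t = Dminus f x t) := by
  obtain ⟨K, hK⟩ := hf
  have key := fun (x : X) {t s : ℝ} => Dplus_le_Dminus hK.continuous x (t := t) (s := s)
  refine ⟨fun x t s => key x, fun x => ⟨?_, ?_⟩, fun x => ?_⟩
  · intro t ht s _ hts
    rcases hts.eq_or_lt with rfl | hlt
    · exact le_rfl
    · exact (key x ht hlt).trans (Dminus_le_Dplus f x s)
  · intro t ht s _ hts
    rcases hts.eq_or_lt with rfl | hlt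
    · exact le_rfl
    · exact (Dminus_le_Dplus f x t).trans (key x ht hlt)
  · refine ⟨{t | 0 ≤ t ∧ Dminus f x t < Dplus f x t}, ?_, fun t ht htE => ?_⟩
    · refine Set.PairwiseDisjoint.countable_of_isOpen
        (s := fun t => Ioo (Dminus f x t) (Dplus f x t)) ?_ (fun _ _ => isOpen_Ioo)
        (fun t ht => nonempty_Ioo.2 ht.2)
      intro t ht s hs hne
      refine Set.disjoint_left.2 fun r hrt hrs => ?_
      rcases hne.lt_or_gt with hlt | hlt
      · exact absurd (hrt.2.trans_le (key x ht.1 hlt)) hrs.1.not_gt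
      · exact absurd (hrs.2.trans_le (key x hs.1 hlt)) hrt.1.not_gt
    · exact le_antisymm (not_lt.1 fun h => htE ⟨ht, h⟩) (Dminus_le_Dplus f x t)
end

section
/- Let X be a compact metric space, let μ, ν ∈ P(X) and let γ ∈ P(X×X) be such that μ and ν are absolutely continuous with respect to the first marginal π¹_♯γ. Then Ent_{γ_♯ν}(γ_♯μ) ≤ Ent_ν(μ). -/
open Filter Topology Set MeasureTheory
open scoped ENNReal NNReal

/-- The nonnegative integrand `z log z - z + 1 ≥ 0` used to define the relative entropy:
for probability measures `ρ = f·σ` one has `∫ (f log f - f + 1) dσ = ∫ f log f dσ`. -/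
noncomputable def entFun (z : ℝ) : ℝ := z * Real.log z - z + 1

open scoped Classical in
/-- The relative entropy `Ent_σ(ρ) = ∫ f log f dσ` if `ρ = f·σ ≪ σ`, and `+∞` otherwise
(for probability measures `ρ, σ` this agrees with `∫⁻ (f log f - f + 1) dσ ∈ [0,∞]`). -/
noncomputable def Ent {X : Type*} [MeasurableSpace X]
    (σ ρ : MeasureTheory.Measure X) : ℝ≥0∞ :=
  if ρ ≪ σ then ∫⁻ x, ENNReal.ofReal (entFun ((ρ.rnDeriv σ x).toReal)) ∂σ else ⊤

/-- Push-forward of `μ` via the plan `γ` (Definition 5.3):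
`γ_♯μ := π²_♯ γ_μ`, where `dγ_μ(x,y) = (dμ/d(π¹_♯γ))(x) dγ(x,y)`. -/
noncomputable def planPush {X : Type*} [MeasurableSpace X]
    (γ : MeasureTheory.Measure (X × X)) (μ : MeasureTheory.Measure X) :
    MeasureTheory.Measure X :=
  (γ.withDensity (fun p => μ.rnDeriv (γ.map Prod.fst) p.1)).map Prod.snd

open ProbabilityTheory InformationTheory

lemma entFun_eq_klFun : entFun = klFun := by
  ext z
  rw [entFun, klFun_apply]
  ring

lemma Ent_eq_klDiv {X : Type*} [MeasurableSpace X] (σ ρ : Measure X)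
    [IsFiniteMeasure σ] [IsFiniteMeasure ρ] : Ent σ ρ = klDiv ρ σ := by
  rw [Ent, klDiv_eq_lintegral_klFun, entFun_eq_klFun]

/-- Reweighting a plan by a function of the first coordinate reweights its first marginal and
keeps its disintegration. -/
lemma withDensity_comp_fst_eq_compProd {X Y : Type*} [MeasurableSpace X] [MeasurableSpace Y]
    [StandardBorelSpace Y] [Nonempty Y] (γ : Measure (X × Y)) [IsFiniteMeasure γ]
    {f : X → ℝ≥0∞} (hf : Measurable f) :
    γ.withDensity (fun p => f p.1) = (γ.fst.withDensity f).compProd γ.condKernel := by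
  ext s hs
  rw [withDensity_apply _ hs, Measure.compProd_apply hs,
    lintegral_withDensity_eq_lintegral_mul _ hf (Kernel.measurable_kernel_prodMk_left hs),
    ← lintegral_indicator hs]
  conv_lhs => rw [← γ.disintegrate γ.condKernel]
  rw [Measure.lintegral_compProd (Measurable.indicator (by fun_prop) hs)]
  refine lintegral_congr fun x => ?_
  have h (y : Y) : s.indicator (fun p => f p.1) (x, y)
      = (Prod.mk x ⁻¹' s).indicator (fun _ => f x) y := rfl
  simp_rw [h]
  rw [lintegral_indicator_const (measurable_prodMk_left hs), Pi.mul_apply]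

/-- Push-forward via a plan is the composition with the plan's disintegration kernel. -/
lemma planPush_eq_bind_condKernel {X : Type*} [MeasurableSpace X] [StandardBorelSpace X]
    [Nonempty X] (γ : Measure (X × X)) [IsFiniteMeasure γ] (μ : Measure X) [IsFiniteMeasure μ]
    (hμ : μ ≪ γ.map Prod.fst) : planPush γ μ = μ.bind γ.condKernel := by
  change μ ≪ γ.fst at hμ
  have h := withDensity_comp_fst_eq_compProd γ (Measure.measurable_rnDeriv μ γ.fst)
  rw [Measure.withDensity_rnDeriv_eq _ _ hμ] at h
  rw [← Measure.snd_compProd, ← h]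
  rfl

/-- **Entropy decreases under push-forward via a plan** (Proposition 5.4(i)): if
`μ, ν ≪ π¹_♯γ` then `Ent_{γ_♯ν}(γ_♯μ) ≤ Ent_ν(μ)`. -/
theorem stmt17 {X : Type*} [MetricSpace X] [CompactSpace X] [Nonempty X]
    [MeasurableSpace X] [BorelSpace X]
    (μ ν : Measure X) (γ : Measure (X × X))
    [IsProbabilityMeasure μ] [IsProbabilityMeasure ν] [IsProbabilityMeasure γ]
    (hμ : μ ≪ γ.map Prod.fst) (hν : ν ≪ γ.map Prod.fst) :
    Ent (planPush γ ν) (planPush γ μ) ≤ Ent ν μ := by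
  rw [planPush_eq_bind_condKernel γ μ hμ, planPush_eq_bind_condKernel γ ν hν,
    Ent_eq_klDiv, Ent_eq_klDiv]
  exact klDiv_comp_right_le μ ν γ.condKernel
end
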